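/- Let X* = P_{k₂} C Q_{k₁}ᵀ for some C ∈ ℝ^{k₂×k₁} (i.e., X* is (k₁,k₂)-low-rank on the graphs L₁ and L₂), let E ∈ ℝ^{p×n}, and set X = X* + E. Let φ : ℝ^{p×n} → ℝ be nonnegative, convex, and even (φ(−A) = φ(A) for all A). Let γ > 0, assume λ_{k₁+1} > 0 and ω_{k₂+1} > 0, and set γ₁ = γ/λ_{k₁+1} and γ₂ = γ/ω_{k₂+1}. If U* ∈ ℝ^{p×n} is a global minimizer of U ↦ φ(U − X) + γ₁·tr(U L₁ Uᵀ) + γ₂·tr(Uᵀ L₂ U), then φ(U* − X) + γ₁·λ_{k₁+1}·‖U* Q̄_{k₁}‖_F² + γ₂·ω_{k₂+1}·‖P̄_{k₂}ᵀ U*‖_F² ≤ φ(E) + γ·‖X*‖_F²·(λ_{k₁}/λ_{k₁+1} + ω_{k₂}/ω_{k₂+1}). -/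

import Mathlib

/-!
Comparing the minimizer `U*` with the feasible point `X*` gives
`φ(U* - X) + γ₁ tr(U* L₁ U*ᵀ) + γ₂ tr(U*ᵀ L₂ U*) ≤ φ(-E) + γ₁ tr(X* L₁ X*ᵀ) + γ₂ tr(X*ᵀ L₂ X*)`,
and `φ(-E) = φ(E)`. In the eigenbasis, `tr(A Q Λ Qᵀ Aᵀ) = ∑ i j, λ j * (A Q) i j ^ 2`
(`trace_quad_eq`). Keeping only the columns `j ≥ k` bounds this below by `λ_{k+1} ‖A Q̄_k‖²`
(`tail_le_trace_quad`); if only the columns `j < k` of `A Q` are nonzero, it is bounded above by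
`λ_k ‖A‖²` (`trace_quad_le_of_head`). The terms with `L₂` follow by applying the same bounds to
transposes.
-/

open Matrix BigOperators

/-- Squared Frobenius norm of a real matrix. -/
noncomputable def frobSq {m n : ℕ} (A : Matrix (Fin m) (Fin n) ℝ) : ℝ :=
  ∑ i, ∑ j, (A i j) ^ 2

lemma frobSq_transpose {m n : ℕ} (A : Matrix (Fin m) (Fin n) ℝ) : frobSq Aᵀ = frobSq A := by
  unfold frobSq
  rw [Finset.sum_comm]
  rfl

lemma trace_quad_eq {m n : ℕ} (A : Matrix (Fin m) (Fin n) ℝ) (Q : Matrix (Fin n) (Fin n) ℝ)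
    (lam : Fin n → ℝ) :
    Matrix.trace (A * (Q * Matrix.diagonal lam * Qᵀ) * Aᵀ) =
      ∑ i, ∑ j, lam j * ((A * Q) i j) ^ 2 := by
  have h : A * (Q * Matrix.diagonal lam * Qᵀ) * Aᵀ
      = (A * Q) * Matrix.diagonal lam * (A * Q)ᵀ := by
    simp only [Matrix.transpose_mul, Matrix.mul_assoc]
  rw [h, Matrix.trace]
  refine Finset.sum_congr rfl fun i _ => ?_
  rw [Matrix.diag_apply, Matrix.mul_apply]
  refine Finset.sum_congr rfl fun j _ => ?_
  rw [Matrix.mul_diagonal, Matrix.transpose_apply]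
  ring

/-- Right multiplication by an orthogonal matrix preserves the Frobenius norm. -/
lemma frobSq_mul_orthogonal {m n : ℕ} (A : Matrix (Fin m) (Fin n) ℝ)
    (Q : Matrix (Fin n) (Fin n) ℝ) (hQ : Q * Qᵀ = 1) : frobSq (A * Q) = frobSq A := by
  -- both sides are values of the quadratic form with all eigenvalues equal to `1`
  have h1 := trace_quad_eq A Q (fun _ => 1)
  have h2 := trace_quad_eq A 1 (fun _ => 1)
  simp only [Matrix.diagonal_one, Matrix.mul_one, Matrix.transpose_one, hQ, one_mul] at h1 h2
  unfold frobSq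
  rw [← h1, ← h2]

lemma tail_le_trace_quad {m n k : ℕ} (hk : k < n) (A : Matrix (Fin m) (Fin n) ℝ)
    (Q : Matrix (Fin n) (Fin n) ℝ) (lam : Fin n → ℝ) (h0 : ∀ i, 0 ≤ lam i) (hm : Monotone lam) :
    lam ⟨k, hk⟩ *
        frobSq (A * Matrix.of fun (i : Fin n) (j : Fin (n - k)) => Q i ⟨k + j, by omega⟩) ≤
      Matrix.trace (A * (Q * Matrix.diagonal lam * Qᵀ) * Aᵀ) := by
  rw [trace_quad_eq, frobSq, Finset.mul_sum]
  refine Finset.sum_le_sum fun i _ => ?_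
  let f : Fin (n - k) → Fin n := fun j => ⟨k + j, by omega⟩
  have hf : Function.Injective f := fun a b hab => by
    have := congrArg Fin.val hab
    simp only [f] at this
    exact Fin.ext (by omega)
  calc _ = ∑ j, lam ⟨k, hk⟩ * ((A * Q) i (f j)) ^ 2 := by
        rw [Finset.mul_sum]
        rfl
    _ ≤ ∑ j, lam (f j) * ((A * Q) i (f j)) ^ 2 := by
        refine Finset.sum_le_sum fun j _ => mul_le_mul_of_nonneg_right (hm ?_) (sq_nonneg _)
        exact Fin.mk_le_mk.2 (by omega)
    _ = ∑ j ∈ Finset.univ.image f, lam j * ((A * Q) i j) ^ 2 := by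
        rw [Finset.sum_image fun a _ b _ hab => hf hab]
    _ ≤ _ := Finset.sum_le_sum_of_subset_of_nonneg (Finset.subset_univ _)
        fun j _ _ => mul_nonneg (h0 j) (sq_nonneg _)

/-- If the rows of `A = B Q_kᵀ` lie in the span of the first `k` eigenvectors, the quadratic form
is at most `λ_k ‖A‖²`. The index `k - 1` is the zero-based position of `λ_k`. -/
lemma trace_quad_le_of_head {m n k : ℕ} (hk1 : 1 ≤ k) (hk : k < n)
    (B : Matrix (Fin m) (Fin k) ℝ) (A : Matrix (Fin m) (Fin n) ℝ)
    (Q : Matrix (Fin n) (Fin n) ℝ) (lam : Fin n → ℝ) (hQ₁ : Qᵀ * Q = 1) (hQ₂ : Q * Qᵀ = 1)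
    (hm : Monotone lam)
    (hA : A = B * (Matrix.of fun (i : Fin n) (j : Fin k) => Q i ⟨j, by omega⟩)ᵀ) :
    Matrix.trace (A * (Q * Matrix.diagonal lam * Qᵀ) * Aᵀ) ≤
      lam ⟨k - 1, by omega⟩ * frobSq A := by
  rw [trace_quad_eq, ← frobSq_mul_orthogonal A Q hQ₂, frobSq, Finset.mul_sum]
  refine Finset.sum_le_sum fun i _ => ?_
  rw [Finset.mul_sum]
  refine Finset.sum_le_sum fun j _ => ?_
  by_cases hj : (j : ℕ) < k
  · exact mul_le_mul_of_nonneg_right (hm (Fin.mk_le_mk.2 (by omega))) (sq_nonneg _)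
  · have hz : (A * Q) i j = 0 := by
      rw [hA, Matrix.mul_assoc, Matrix.mul_apply]
      refine Finset.sum_eq_zero fun l _ => ?_
      have h : ((Matrix.of fun (i : Fin n) (j : Fin k) => Q i ⟨j, by omega⟩)ᵀ * Q) l j
          = (Qᵀ * Q) ⟨l, by omega⟩ j := rfl
      have hne : (⟨l, by omega⟩ : Fin n) ≠ j := fun e => hj (by rw [← e]; exact l.2)
      rw [h, hQ₁, Matrix.one_apply_ne hne, mul_zero]
    simp [hz]

theorem frpcag_bound {p n k₁ k₂ : ℕ}
    (hk₁1 : 1 ≤ k₁) (hk₁n : k₁ < n) (hk₂1 : 1 ≤ k₂) (hk₂p : k₂ < p)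
    -- eigendecomposition of the sample graph Laplacian L₁ = Q Λ Qᵀ
    (L₁ : Matrix (Fin n) (Fin n) ℝ) (Q : Matrix (Fin n) (Fin n) ℝ) (lam : Fin n → ℝ)
    (hQ₁ : Qᵀ * Q = 1) (hQ₂ : Q * Qᵀ = 1)
    (hlam_nonneg : ∀ i, 0 ≤ lam i) (hlam_mono : Monotone lam)
    (hL₁ : L₁ = Q * Matrix.diagonal lam * Qᵀ)
    -- eigendecomposition of the feature graph Laplacian L₂ = P Ω Pᵀ
    (L₂ : Matrix (Fin p) (Fin p) ℝ) (P : Matrix (Fin p) (Fin p) ℝ) (om : Fin p → ℝ)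
    (hP₁ : Pᵀ * P = 1) (hP₂ : P * Pᵀ = 1)
    (hom_nonneg : ∀ i, 0 ≤ om i) (hom_mono : Monotone om)
    (hL₂ : L₂ = P * Matrix.diagonal om * Pᵀ)
    -- the (k₁,k₂)-low-rank matrix X* = P_{k₂} C Q_{k₁}ᵀ, the noise E and the data X
    (C : Matrix (Fin k₂) (Fin k₁) ℝ)
    (Xstar : Matrix (Fin p) (Fin n) ℝ)
    (hXstar : Xstar = (Matrix.of fun (i : Fin p) (j : Fin k₂) => P i ⟨j, by omega⟩) * C *
      (Matrix.of fun (i : Fin n) (j : Fin k₁) => Q i ⟨j, by omega⟩)ᵀ)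
    (E X : Matrix (Fin p) (Fin n) ℝ) (hX : X = Xstar + E)
    -- the loss function φ
    (φ : Matrix (Fin p) (Fin n) ℝ → ℝ)
    (hφ_nonneg : ∀ A, 0 ≤ φ A) (hφ_convex : ConvexOn ℝ Set.univ φ)
    (hφ_even : ∀ A, φ (-A) = φ A)
    -- the regularization parameters
    (γ γ₁ γ₂ : ℝ) (hγ : 0 < γ)
    (hlam_pos : 0 < lam ⟨k₁, hk₁n⟩) (hom_pos : 0 < om ⟨k₂, hk₂p⟩)
    (hγ₁ : γ₁ = γ / lam ⟨k₁, hk₁n⟩) (hγ₂ : γ₂ = γ / om ⟨k₂, hk₂p⟩)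
    -- U* is a global minimizer of the FRPCAG objective
    (Ustar : Matrix (Fin p) (Fin n) ℝ)
    (hUstar : ∀ U : Matrix (Fin p) (Fin n) ℝ,
      φ (Ustar - X) + γ₁ * Matrix.trace (Ustar * L₁ * Ustarᵀ) +
          γ₂ * Matrix.trace (Ustarᵀ * L₂ * Ustar) ≤
        φ (U - X) + γ₁ * Matrix.trace (U * L₁ * Uᵀ) +
          γ₂ * Matrix.trace (Uᵀ * L₂ * U)) :
    φ (Ustar - X) +
      γ₁ * lam ⟨k₁, hk₁n⟩ *
        frobSq (Ustar * Matrix.of fun (i : Fin n) (j : Fin (n - k₁)) => Q i ⟨k₁ + j, by omega⟩) +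
      γ₂ * om ⟨k₂, hk₂p⟩ *
        frobSq ((Matrix.of fun (i : Fin p) (j : Fin (p - k₂)) => P i ⟨k₂ + j, by omega⟩)ᵀ * Ustar)
    ≤ φ E + γ * frobSq Xstar *
        (lam ⟨k₁ - 1, by omega⟩ / lam ⟨k₁, hk₁n⟩ +
          om ⟨k₂ - 1, by omega⟩ / om ⟨k₂, hk₂p⟩) := by
  subst hL₁ hL₂
  have hmin := hUstar Xstar
  have hE : φ (Xstar - X) = φ E := by
    rw [← hφ_even E, hX]
    congr 1
    abel
  rw [hE] at hmin
  have hγ₁0 : 0 ≤ γ₁ := hγ₁ ▸ (div_pos hγ hlam_pos).le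
  have hγ₂0 : 0 ≤ γ₂ := hγ₂ ▸ (div_pos hγ hom_pos).le
  have low₁ := tail_le_trace_quad hk₁n Ustar Q lam hlam_nonneg hlam_mono
  have low₂ := tail_le_trace_quad hk₂p Ustarᵀ P om hom_nonneg hom_mono
  have up₁ := trace_quad_le_of_head hk₁1 hk₁n _ Xstar Q lam hQ₁ hQ₂ hlam_mono hXstar
  have up₂ := trace_quad_le_of_head hk₂1 hk₂p
    ((Matrix.of fun (i : Fin n) (j : Fin k₁) => Q i ⟨j, by omega⟩) * Cᵀ) Xstarᵀ P om hP₁ hP₂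
    hom_mono (by rw [hXstar]; simp only [Matrix.transpose_mul, Matrix.transpose_transpose,
      Matrix.mul_assoc])
  rw [Matrix.transpose_transpose, ← frobSq_transpose, Matrix.transpose_mul,
    Matrix.transpose_transpose] at low₂
  rw [Matrix.transpose_transpose, frobSq_transpose] at up₂
  have a₁ := mul_le_mul_of_nonneg_left low₁ hγ₁0
  have a₂ := mul_le_mul_of_nonneg_left low₂ hγ₂0
  have b₁ := mul_le_mul_of_nonneg_left up₁ hγ₁0
  have b₂ := mul_le_mul_of_nonneg_left up₂ hγ₂0
  have hrhs : γ * frobSq Xstar * (lam ⟨k₁ - 1, by omega⟩ / lam ⟨k₁, hk₁n⟩ +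
      om ⟨k₂ - 1, by omega⟩ / om ⟨k₂, hk₂p⟩) =
      γ₁ * (lam ⟨k₁ - 1, by omega⟩ * frobSq Xstar) +
      γ₂ * (om ⟨k₂ - 1, by omega⟩ * frobSq Xstar) := by
    rw [hγ₁, hγ₂]
    ring
  rw [hrhs, mul_assoc γ₁, mul_assoc γ₂]
  linarith
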